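/- Let p be a prime, let n, k > 0 be integers, and let a be a nonzero element of F_p. If the polynomial x^n (x^k + a) permutes F_p, then gcd(k, p−1) ≥ √(p − 3/4) − 1/2, and in particular gcd(k, p−1) > √p − 1. -/

import Mathlib

/-!
Put `d = gcd(k, p-1)` and `s = (p-1)/d`. The proof yields the slightly stronger bound `s ≤ d`,
that is `p - 1 ≤ d²`, by Hermite's criterion: for `0 < t < p - 1` the power sum of `f(x)^t` over
`F_p` vanishes. Expanding `(x^k + a)^t`, the only monomials with nonzero power sum are those with
`p - 1 ∣ n t + k i`, and their coefficients `C(t, i) a^(t-i)` are nonzero since `t < p`. Hence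
there is never exactly one such `i ∈ [0, t]` (`exists_other_exponent`).

For `t = d u` the condition on `i` becomes `i ≡ m u (mod s)` for a fixed residue `m`
(`exists_residue`). Suppose `d < s`. With `t = d` this forces `m > d`. Let `d U` be the last
multiple of `d` below `s`. As `d U < s`, the residue `i₁` of `m U` must exceed `d U`; as
`s ≤ d (U + 1) < 2 s`, the residue `i₂` of `m (U + 1)` must be at most `d (U + 1) - s`. But
`i₂ ≡ i₁ + m`, and `i₁ + m > d (U + 1) ≥ s` gives `i₂ = i₁ + m - s > d (U + 1) - s`, a
contradiction (`le_of_no_unique_residue`).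
-/

theorem sum_pow_zmod (p : ℕ) [Fact p.Prime] (j : ℕ) (hj : 0 < j) :
    ∑ x : ZMod p, x ^ j = if (p - 1) ∣ j then -1 else 0 := by
  classical
  have h := FiniteField.sum_pow_units (ZMod p) j
  rw [ZMod.card] at h
  rw [← h, ← Finset.sum_subset (Finset.subset_univ (Finset.univ.erase (0 : ZMod p)))]
  · symm
    refine Finset.sum_bij (fun u _ => (u : ZMod p)) ?_ ?_ ?_ ?_
    · intro u _; simp
    · intro u _ v _ huv; exact Units.ext huv
    · intro b hb
      exact ⟨Units.mk0 b (by simpa using hb), Finset.mem_univ _, rfl⟩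
    · intro u _; simp
  · intro x _ hx
    have : x = 0 := by simpa using hx
    rw [this, zero_pow hj.ne']

/-- Consequence of Hermite's criterion: the expansion of `f ^ t` cannot contain exactly one
monomial whose exponent is divisible by `p - 1`. -/
theorem exists_other_exponent (p : ℕ) [Fact p.Prime] (n k : ℕ) (hn : 0 < n)
    (a : ZMod p) (ha : a ≠ 0)
    (hperm : Function.Bijective (fun x : ZMod p => x ^ n * (x ^ k + a)))
    (t : ℕ) (ht0 : 0 < t) (ht : t < p - 1) (i : ℕ) (hi : i ≤ t)
    (hdvd : (p - 1) ∣ n * t + k * i) :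
    ∃ j ≤ t, j ≠ i ∧ (p - 1) ∣ n * t + k * j := by
  by_contra! hcon
  have h0 : ∑ x : ZMod p, (x ^ n * (x ^ k + a)) ^ t = 0 := by
    rw [hperm.sum_comp (fun y : ZMod p => y ^ t)]
    exact FiniteField.sum_pow_lt_card_sub_one (ZMod p) t (by rwa [ZMod.card])
  have h1 : ∑ x : ZMod p, (x ^ n * (x ^ k + a)) ^ t =
      ∑ j ∈ Finset.range (t + 1), a ^ (t - j) * (t.choose j : ZMod p) *
        ∑ x : ZMod p, x ^ (n * t + k * j) := by
    simp_rw [Finset.mul_sum]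
    rw [Finset.sum_comm]
    refine Finset.sum_congr rfl fun x _ => ?_
    rw [mul_pow, add_pow, Finset.mul_sum]
    refine Finset.sum_congr rfl fun j _ => ?_
    rw [pow_add, pow_mul, pow_mul]
    ring
  have hpos : ∀ j, 0 < n * t + k * j := fun j => by positivity
  rw [h0, Finset.sum_eq_single_of_mem i (by simp; omega), sum_pow_zmod p _ (hpos i),
    if_pos hdvd] at h1
  · have hc : (t.choose i : ZMod p) ≠ 0 := by
      rw [Ne, ZMod.natCast_eq_zero_iff]
      intro h
      have hp : p.Prime := Fact.out
      have h2 : p ∣ t.factorial := by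
        rw [← Nat.choose_mul_factorial_mul_factorial hi, mul_assoc]
        exact h.mul_right _
      have := (hp.dvd_factorial).1 h2
      omega
    exact (mul_ne_zero (mul_ne_zero (pow_ne_zero _ ha) hc) (by simp)) h1.symm
  · intro j hj hji
    rw [sum_pow_zmod p _ (hpos j), if_neg (hcon j (by simp at hj; omega) hji), mul_zero]

/-- For `t = d * u` the divisibility condition on `i` is a linear congruence modulo `s`, solved
by inverting `k / d` modulo `s`. -/
theorem exists_residue (n d s k' : ℕ) (hd : 0 < d) (hs : 0 < s) (hc : k'.Coprime s) :
    ∃ m < s, ∀ u i : ℕ, d * s ∣ n * (d * u) + d * k' * i ↔ i % s = m * u % s := by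
  have : NeZero s := ⟨hs.ne'⟩
  refine ⟨(-(n : ZMod s) * (k' : ZMod s)⁻¹).val, ZMod.val_lt _, fun u i => ?_⟩
  have hk : (k' : ZMod s) * (k' : ZMod s)⁻¹ = 1 := ZMod.coe_mul_inv_eq_one k' hc
  have e : n * (d * u) + d * k' * i = d * (n * u + k' * i) := by ring
  rw [e, Nat.mul_dvd_mul_iff_left hd, ← ZMod.natCast_eq_zero_iff]
  change _ ↔ i ≡ _ [MOD s]
  rw [← ZMod.natCast_eq_natCast_iff]
  push_cast
  rw [ZMod.natCast_zmod_val]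
  constructor
  · intro h
    linear_combination (k' : ZMod s)⁻¹ * h - (i : ZMod s) * hk
  · intro h
    rw [h]
    linear_combination (-(n : ZMod s) * u) * hk

theorem le_of_no_unique_residue (d s m : ℕ) (hd : 0 < d) (hm : m < s)
    (H : ∀ u, 0 < u → u < s → ∀ i ≤ d * u, i % s = m * u % s →
      ∃ j ≤ d * u, j ≠ i ∧ j % s = m * u % s) : s ≤ d := by
  by_contra! hds
  have small : ∀ u, 0 < u → u < s → d * u < s → d * u < m * u % s := by
    intro u hu hus hdu
    by_contra! hle
    obtain ⟨j, hj, hne, hjm⟩ := H u hu hus _ hle (Nat.mod_mod _ _)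
    rw [Nat.mod_eq_of_lt (by omega)] at hjm
    exact hne hjm
  have hmd : d < m := by
    have := small 1 one_pos (by omega) (by omega)
    rwa [mul_one, mul_one, Nat.mod_eq_of_lt hm] at this
  obtain ⟨U, hU⟩ : ∃ U, U = (s - 1) / d := ⟨_, rfl⟩
  have hU0 : 0 < U := hU ▸ Nat.div_pos (by omega) hd
  have hU1 : d * U ≤ s - 1 := hU ▸ Nat.mul_div_le _ _
  have hU2 : s - 1 < d * (U + 1) := hU ▸ Nat.lt_mul_div_succ _ hd
  have hUs : U < s := by
    have := Nat.le_mul_of_pos_left U hd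
    omega
  have h1 := small U hU0 hUs (by omega)
  have hlt := Nat.mod_lt (m * U) (show 0 < s by omega)
  -- `d = 1` would give `d * U = s - 1`, leaving no room for the residue of `m * U`.
  have hd2 : 2 ≤ d := by
    by_contra! h
    obtain rfl : d = 1 := by omega
    omega
  have hUs' : U + 1 < s := by
    have := Nat.mul_le_mul_right U hd2
    omega
  have hlt2 := Nat.mod_lt (m * (U + 1)) (show 0 < s by omega)
  obtain ⟨j, hj, hne, hjm⟩ := H (U + 1) (by omega) hUs' (m * (U + 1) % s) (by omega)
    (Nat.mod_mod _ _)
  have hjs : m * (U + 1) % s + s ≤ j := by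
    have e := Nat.mod_add_div j s
    rw [hjm] at e
    rcases Nat.eq_zero_or_pos (j / s) with h | h
    · rw [h] at e; omega
    · have := Nat.le_mul_of_pos_right s h
      omega
  have h3 : m * (U + 1) % s = m * U % s + m - s := by
    rw [mul_add, mul_one, Nat.add_mod, Nat.mod_eq_of_lt hm,
      Nat.mod_eq_sub_mod (by rw [mul_add] at hU2; omega), Nat.mod_eq_of_lt (by omega)]
  rw [mul_add] at hj hU2
  omega

/-- If `x^n (x^k + a)` permutes the prime field `F_p` (with `n, k > 0`, `a ≠ 0`), then
`gcd(k, p-1) ≥ √(p - 3/4) - 1/2`, and in particular `gcd(k, p-1) > √p - 1`. -/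
theorem permutation_binomial_gcd_lower_bound' (p : ℕ) (hp : p.Prime) (n k : ℕ)
    (hn : 0 < n) (hk : 0 < k) (a : ZMod p) (ha : a ≠ 0)
    (hperm : Function.Bijective (fun x : ZMod p => x ^ n * (x ^ k + a))) :
    Real.sqrt ((p : ℝ) - 3 / 4) - 1 / 2 ≤ (Nat.gcd k (p - 1) : ℝ) ∧
      Real.sqrt (p : ℝ) - 1 < (Nat.gcd k (p - 1) : ℝ) := by
  have : Fact p.Prime := ⟨hp⟩
  have hp2 := hp.two_le
  obtain ⟨d, hd⟩ : ∃ d, d = Nat.gcd k (p - 1) := ⟨_, rfl⟩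
  have hd0 : 0 < d := hd ▸ Nat.gcd_pos_of_pos_left _ hk
  obtain ⟨k', hk'⟩ : d ∣ k := hd ▸ Nat.gcd_dvd_left _ _
  obtain ⟨s, hs⟩ : d ∣ p - 1 := hd ▸ Nat.gcd_dvd_right _ _
  have hs0 : 0 < s := by
    rcases Nat.eq_zero_or_pos s with h | h
    · subst h; omega
    · exact h
  have hc : k'.Coprime s := by
    rw [hk', hs, Nat.gcd_mul_left] at hd
    exact Nat.eq_of_mul_eq_mul_left hd0 (by rw [← hd, mul_one])
  obtain ⟨m, hm, hres⟩ := exists_residue n d s k' hd0 hs0 hc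
  have hsd : s ≤ d := by
    refine le_of_no_unique_residue d s m hd0 hm fun u hu hus i hi him => ?_
    have := exists_other_exponent p n k hn a ha hperm (d * u) (by positivity)
      (by rw [hs]; exact Nat.mul_lt_mul_of_pos_left hus hd0) i hi
      (by rw [hs, hk']; exact (hres u i).2 him)
    obtain ⟨j, hj, hne, hjd⟩ := this
    rw [hs, hk'] at hjd
    exact ⟨j, hj, hne, (hres u j).1 hjd⟩
  have hpd : p ≤ d * d + 1 := by
    have := Nat.mul_le_mul_left d hsd
    omega
  rw [← hd]
  have hR : (p : ℝ) ≤ d * d + 1 := by exact_mod_cast hpd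
  have hdR : (0 : ℝ) < d := by exact_mod_cast hd0
  constructor
  · have : Real.sqrt ((p : ℝ) - 3 / 4) ≤ d + 1 / 2 := by
      apply Real.sqrt_le_iff.2
      constructor <;> nlinarith
    linarith
  · have : Real.sqrt (p : ℝ) < d + 1 := by
      apply (Real.sqrt_lt' (by linarith)).2
      nlinarith
    linarith
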